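/- Let u be a monotone traveling wave solution of the unbalanced Allen-Cahn equation in the plane connecting −1 to 1. Then the zero level set of u is the graph y = k(x) of a C³ function k : ℝ → ℝ which is globally Lipschitz: there exists a constant C > 0 such that |k'(x)| ≤ C for all x ∈ ℝ. -/

import Mathlib

open Real Filter MeasureTheory Metric

noncomputable def pdx (u : ℝ → ℝ → ℝ) (x y : ℝ) : ℝ := deriv (fun t => u t y) x

noncomputable def pdy (u : ℝ → ℝ → ℝ) (x y : ℝ) : ℝ := deriv (fun t => u x t) y

noncomputable def pdxx (u : ℝ → ℝ → ℝ) (x y : ℝ) : ℝ := deriv (fun t => pdx u t y) x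

noncomputable def pdyy (u : ℝ → ℝ → ℝ) (x y : ℝ) : ℝ := deriv (fun t => pdy u x t) y

/-- `F` is an unbalanced double-well potential. -/
def UnbalancedDoubleWell (F : ℝ → ℝ) : Prop :=
  ContDiff ℝ 3 F ∧ deriv F (-1) = 0 ∧ deriv F 1 = 0 ∧
  0 < deriv (deriv F) (-1) ∧ 0 < deriv (deriv F) 1 ∧
  (∀ s ∈ Set.Ioo (-1 : ℝ) 0, 0 < deriv F s) ∧
  (∀ s ∈ Set.Ioo (0 : ℝ) 1, deriv F s < 0) ∧
  F (-1) = 0 ∧ 0 < F 1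

/-- `u` is a `C³` solution of `Δu + c uᵧ = F'(u)` on `ℝ²` with `|u| ≤ 1`
which is monotone in `y`. -/
def IsSolution (F : ℝ → ℝ) (c : ℝ) (u : ℝ → ℝ → ℝ) : Prop :=
  ContDiff ℝ 3 (fun p : ℝ × ℝ => u p.1 p.2) ∧
  (∀ x y : ℝ, pdxx u x y + pdyy u x y + c * pdy u x y = deriv F (u x y)) ∧
  (∀ x y : ℝ, |u x y| ≤ 1) ∧
  (∀ x y : ℝ, 0 < pdy u x y)

/-- A monotone traveling wave solution connecting `-1` to `1`. -/
def IsTravelingWave (F : ℝ → ℝ) (c : ℝ) (u : ℝ → ℝ → ℝ) : Prop :=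
  IsSolution F c u ∧
  (∀ x : ℝ, Tendsto (fun y => u x y) atTop (nhds 1)) ∧
  (∀ x : ℝ, Tendsto (fun y => u x y) atBot (nhds (-1)))

/-- `wx, wy, wxx, wyy` are the first and pure second partial derivatives of the continuous function
`w`. -/
structure HasJet (w wx wy wxx wyy : ℝ → ℝ → ℝ) : Prop where
  cont : Continuous (fun p : ℝ × ℝ => w p.1 p.2)
  dx : ∀ x y, HasDerivAt (fun t => w t y) (wx x y) x
  dy : ∀ x y, HasDerivAt (fun t => w x t) (wy x y) y
  dxx : ∀ x y, HasDerivAt (fun t => wx t y) (wxx x y) x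
  dyy : ∀ x y, HasDerivAt (fun t => wy x t) (wyy x y) y

namespace HasJet

variable {w wx wy wxx wyy v vx vy vxx vyy : ℝ → ℝ → ℝ}

lemma sub (hw : HasJet w wx wy wxx wyy) (hv : HasJet v vx vy vxx vyy) :
    HasJet (fun x y => w x y - v x y) (fun x y => wx x y - vx x y)
      (fun x y => wy x y - vy x y) (fun x y => wxx x y - vxx x y)
      (fun x y => wyy x y - vyy x y) where
  cont := hw.cont.sub hv.cont
  dx x y := (hw.dx x y).sub (hv.dx x y)
  dy x y := (hw.dy x y).sub (hv.dy x y)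
  dxx x y := (hw.dxx x y).sub (hv.dxx x y)
  dyy x y := (hw.dyy x y).sub (hv.dyy x y)

lemma const_mul (hw : HasJet w wx wy wxx wyy) (r : ℝ) :
    HasJet (fun x y => r * w x y) (fun x y => r * wx x y)
      (fun x y => r * wy x y) (fun x y => r * wxx x y)
      (fun x y => r * wyy x y) where
  cont := hw.cont.const_mul r
  dx x y := (hw.dx x y).const_mul r
  dy x y := (hw.dy x y).const_mul r
  dxx x y := (hw.dxx x y).const_mul r
  dyy x y := (hw.dyy x y).const_mul r

lemma swap (hw : HasJet w wx wy wxx wyy) :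
    HasJet (fun x y => w y x) (fun x y => wy y x) (fun x y => wx y x)
      (fun x y => wyy y x) (fun x y => wxx y x) where
  cont := hw.cont.comp continuous_swap
  dx x y := hw.dy y x
  dy x y := hw.dx y x
  dxx x y := hw.dyy y x
  dyy x y := hw.dxx y x

lemma comp_neg_left (hw : HasJet w wx wy wxx wyy) :
    HasJet (fun x y => w (-x) y) (fun x y => -wx (-x) y) (fun x y => wy (-x) y)
      (fun x y => wxx (-x) y) (fun x y => wyy (-x) y) where
  cont := hw.cont.comp (by fun_prop : Continuous fun p : ℝ × ℝ => (-p.1, p.2))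
  dx x y := by
    exact ((hw.dx (-x) y).scomp x (hasDerivAt_neg x)).congr_deriv (by simp)
  dy x y := hw.dy (-x) y
  dxx x y := by
    exact ((hw.dxx (-x) y).scomp x (hasDerivAt_neg x)).neg.congr_deriv (by simp)
  dyy x y := hw.dyy (-x) y

/-- The gauge transform turning `Δ + c ∂_y` into `Δ - c² / 4`. -/
lemma gauge (hw : HasJet w wx wy wxx wyy) (c x₀ y₀ : ℝ) :
    HasJet (fun x y => exp (c / 2 * y) * w (x₀ + x) (y₀ + y))
      (fun x y => exp (c / 2 * y) * wx (x₀ + x) (y₀ + y))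
      (fun x y => exp (c / 2 * y) * (wy (x₀ + x) (y₀ + y) + c / 2 * w (x₀ + x) (y₀ + y)))
      (fun x y => exp (c / 2 * y) * wxx (x₀ + x) (y₀ + y))
      (fun x y => exp (c / 2 * y) * (wyy (x₀ + x) (y₀ + y) + c * wy (x₀ + x) (y₀ + y) +
        c ^ 2 / 4 * w (x₀ + x) (y₀ + y))) where
  cont := by
    have := hw.cont.comp (by fun_prop : Continuous fun p : ℝ × ℝ => (x₀ + p.1, y₀ + p.2))
    exact (by fun_prop : Continuous fun p : ℝ × ℝ => exp (c / 2 * p.2)).mul this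
  dx x y := ((hw.dx (x₀ + x) (y₀ + y)).comp_const_add x₀ x).const_mul _
  dxx x y := ((hw.dxx (x₀ + x) (y₀ + y)).comp_const_add x₀ x).const_mul _
  dy x y := by
    have h1 := (hw.dy (x₀ + x) (y₀ + y)).comp_const_add y₀ y
    have h2 : HasDerivAt (fun t => exp (c / 2 * t)) (exp (c / 2 * y) * (c / 2)) y := by
      simpa using ((hasDerivAt_id y).const_mul (c / 2)).exp
    exact (h2.mul h1).congr_deriv (by ring)
  dyy x y := by
    have h1 := (hw.dy (x₀ + x) (y₀ + y)).comp_const_add y₀ y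
    have h3 := (hw.dyy (x₀ + x) (y₀ + y)).comp_const_add y₀ y
    have h2 : HasDerivAt (fun t => exp (c / 2 * t)) (exp (c / 2 * y) * (c / 2)) y := by
      simpa using ((hasDerivAt_id y).const_mul (c / 2)).exp
    exact (h2.mul (h3.add (h1.const_mul (c / 2)))).congr_deriv (by
      simp only [Pi.add_apply]; ring)

end HasJet

lemma second_deriv_nonneg_of_isLocalMin {f f' : ℝ → ℝ} {f'' t : ℝ}
    (h : ∀ s, HasDerivAt f (f' s) s) (h2 : HasDerivAt f' f'' t) (hm : IsLocalMin f t) :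
    0 ≤ f'' := by
  by_contra! hneg
  have hd : deriv f = f' := funext fun s => (h s).deriv
  have hmax : IsLocalMax f t := isLocalMax_of_deriv_deriv_neg
    (by rw [hd, h2.deriv]; exact hneg) hm.deriv_eq_zero (h t).continuousAt
  have hc : f =ᶠ[nhds t] fun _ => f t := by
    filter_upwards [hm, hmax] with s h1 h2 using le_antisymm h2 h1
  have h3 : f' =ᶠ[nhds t] fun _ => 0 := by
    have := hc.deriv
    rw [hd] at this
    simpa using this
  have := h2.congr_of_eventuallyEq h3.symm
  exact hneg.ne (this.unique (hasDerivAt_const t 0))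

/-- Weak minimum principle for `Δ + c ∂_y`. -/
lemma HasJet.nonneg_of_isCompact {g gx gy gxx gyy : ℝ → ℝ → ℝ}
    (hg : HasJet g gx gy gxx gyy) {S : Set (ℝ × ℝ)} (hS : IsCompact S) (c : ℝ)
    (h : ∀ x y, (x, y) ∈ S → g x y < 0 →
      S ∈ nhds (x, y) ∧ gxx x y + gyy x y + c * gy x y < 0) :
    ∀ x y, (x, y) ∈ S → 0 ≤ g x y := by
  intro x y hxy
  obtain ⟨⟨a, b⟩, hab, hmin⟩ := hS.exists_isMinOn ⟨_, hxy⟩ hg.cont.continuousOn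
  by_contra! hneg
  have hgab : g a b < 0 := (hmin hxy).trans_lt hneg
  obtain ⟨hnhds, hlt⟩ := h a b hab hgab
  have hloc : IsLocalMin (fun p : ℝ × ℝ => g p.1 p.2) (a, b) := hmin.isLocalMin hnhds
  have hx : IsLocalMin (fun t => g t b) a :=
    (by fun_prop : Continuous fun t : ℝ => (t, b)).continuousAt.eventually hloc
  have hy : IsLocalMin (fun t => g a t) b :=
    (by fun_prop : Continuous fun t : ℝ => (a, t)).continuousAt.eventually hloc
  have h1 := second_deriv_nonneg_of_isLocalMin (fun s => hg.dx s b) (hg.dxx a b) hx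
  have h2 := second_deriv_nonneg_of_isLocalMin (fun s => hg.dy a s) (hg.dyy a b) hy
  have h3 := hy.hasDerivAt_eq_zero (hg.dy a b)
  rw [h3] at hlt
  linarith

section GradientEstimate

variable {v vx vy vxx vyy : ℝ → ℝ → ℝ}

lemma HasJet.dx_le (hv : HasJet v vx vy vxx vyy) {M N : ℝ}
    (hM : ∀ x ∈ Set.Icc (-1 : ℝ) 1, ∀ y ∈ Set.Icc (-1 : ℝ) 1, |v x y| ≤ M)
    (hN : ∀ x ∈ Set.Icc (-1 : ℝ) 1, ∀ y ∈ Set.Icc (-1 : ℝ) 1, |vxx x y + vyy x y| < N) :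
    vx 0 0 ≤ 2 * M + N := by
  have hM0 : 0 ≤ M := (abs_nonneg _).trans (hM 0 (by simp) 0 (by simp))
  have hN0 : 0 < N := (abs_nonneg _).trans_lt (hN 0 (by simp) 0 (by simp))
  have hφ := (hv.sub hv.comp_neg_left).const_mul (1 / 2)
  have hψ : HasJet (fun x y => M * (y ^ 2 + 2 * x - x ^ 2) + N / 2 * (x - x ^ 2))
      (fun x _ => M * (2 - 2 * x) + N / 2 * (1 - 2 * x)) (fun _ y => M * (2 * y))
      (fun _ _ => M * (-2) + N / 2 * (-2)) (fun _ _ => M * 2) := by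
    refine ⟨by fun_prop, fun x y => ?_, fun x y => ?_, fun x y => ?_, fun x y => ?_⟩
    · have h1 := hasDerivAt_id x
      have h2 := hasDerivAt_pow 2 x
      exact ((((h1.const_mul 2).const_add (y ^ 2)).sub h2).const_mul M |>.add
        ((h1.sub h2).const_mul (N / 2))).congr_deriv (by simp)
    · have h2 := hasDerivAt_pow 2 y
      exact (((h2.add_const (2 * x)).sub_const (x ^ 2)).const_mul M |>.add_const
        (N / 2 * (x - x ^ 2))).congr_deriv (by simp)
    · have h1 := (hasDerivAt_id x).const_mul 2
      exact ((h1.const_sub 2).const_mul M |>.add ((h1.const_sub 1).const_mul (N / 2))).congr_deriv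
        (by simp)
    · have h1 := (hasDerivAt_id y).const_mul 2
      exact (h1.const_mul M).congr_deriv (by simp)
  have key := (hψ.sub hφ).nonneg_of_isCompact
    (S := Set.Icc (0 : ℝ) 1 ×ˢ Set.Icc (-1 : ℝ) 1) (isCompact_Icc.prod isCompact_Icc) 0 (by
      rintro x y ⟨⟨hx0, hx1⟩, hy0, hy1⟩ hneg
      simp only at hx0 hx1 hy0 hy1
      have a1 := hM x ⟨by linarith, hx1⟩ y ⟨hy0, hy1⟩
      have a2 := hM (-x) ⟨by linarith, by linarith⟩ y ⟨hy0, hy1⟩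
      have b1 := hN x ⟨by linarith, hx1⟩ y ⟨hy0, hy1⟩
      have b2 := hN (-x) ⟨by linarith, by linarith⟩ y ⟨hy0, hy1⟩
      rw [abs_le] at a1 a2
      rw [abs_lt] at b1 b2
      have hx0' : 0 < x := by
        refine lt_of_le_of_ne hx0 fun h => ?_
        subst h
        simp at hneg
        nlinarith [mul_nonneg hM0 (sq_nonneg y)]
      have c1 : 0 ≤ N / 2 * (x - x ^ 2) := by
        have : 0 ≤ x - x ^ 2 := by nlinarith
        positivity
      have hbd : y ^ 2 + 2 * x - x ^ 2 < 1 := by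
        by_contra! hge
        have := mul_le_mul_of_nonneg_left hge hM0
        linarith
      have hx1' : x < 1 := by
        refine lt_of_le_of_ne hx1 fun h => ?_
        subst h
        nlinarith
      have hy0' : -1 < y := by
        refine lt_of_le_of_ne hy0 fun h => ?_
        subst h
        nlinarith
      have hy1' : y < 1 := by
        refine lt_of_le_of_ne hy1 fun h => ?_
        subst h
        nlinarith
      exact ⟨prod_mem_nhds (Icc_mem_nhds hx0' hx1') (Icc_mem_nhds hy0' hy1'), by linarith⟩)
  have hslope : ∀ t ∈ Set.Ioo (0 : ℝ) 1, 1 / 2 * (v t 0 - v (-t) 0) ≤ (2 * M + N) * t := by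
    rintro t ⟨h0, h1⟩
    have := key t 0 ⟨⟨h0.le, h1.le⟩, by simp⟩
    nlinarith [mul_nonneg hM0 (sq_nonneg t), mul_nonneg hN0.le (sq_nonneg t), mul_pos hN0 h0]
  have hd : HasDerivAt (fun t => (2 * M + N) * t - 1 / 2 * (v t 0 - v (-t) 0))
      ((2 * M + N) - vx 0 0) 0 :=
    (((hasDerivAt_id (0 : ℝ)).const_mul (2 * M + N)).sub (hφ.dx 0 0)).congr_deriv (by simp; ring)
  have hmin := hd.hasDerivWithinAt (s := Set.Ioi 0)
  have hlim := hasDerivWithinAt_iff_tendsto_slope' (by simp) |>.1 hmin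
  have : 0 ≤ 2 * M + N - vx 0 0 := by
    refine ge_of_tendsto hlim ?_
    filter_upwards [Ioo_mem_nhdsGT (zero_lt_one' ℝ)] with t ht
    have := hslope t ht
    rw [slope_def_field]
    simp only [mul_zero, neg_zero, sub_self, sub_zero]
    exact div_nonneg (by linarith) ht.1.le
  linarith

lemma HasJet.abs_dx_le (hv : HasJet v vx vy vxx vyy) {M N : ℝ}
    (hM : ∀ x ∈ Set.Icc (-1 : ℝ) 1, ∀ y ∈ Set.Icc (-1 : ℝ) 1, |v x y| ≤ M)
    (hN : ∀ x ∈ Set.Icc (-1 : ℝ) 1, ∀ y ∈ Set.Icc (-1 : ℝ) 1, |vxx x y + vyy x y| ≤ N) :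
    |vx 0 0| ≤ 2 * M + N := by
  refine le_of_forall_pos_le_add fun ε hε => abs_le.2 ⟨?_, ?_⟩
  · have := (hv.const_mul (-1)).dx_le (M := M) (N := N + ε)
      (fun x hx y hy => by simpa using hM x hx y hy) (fun x hx y hy => by
        rw [← mul_add, abs_mul]
        simpa using (hN x hx y hy).trans_lt (lt_add_of_pos_right N hε))
    linarith
  · have := hv.dx_le hM (N := N + ε)
      (fun x hx y hy => (hN x hx y hy).trans_lt (lt_add_of_pos_right N hε))
    linarith

/-- Interior gradient estimate for `Δ + c ∂_y` on a unit square. -/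
lemma HasJet.abs_gradient_le (hv : HasJet v vx vy vxx vyy) {c : ℝ} (hc : 0 < c)
    (x₀ y₀ : ℝ) {M N : ℝ}
    (hM : ∀ x ∈ Set.Icc (x₀ - 1) (x₀ + 1), ∀ y ∈ Set.Icc (y₀ - 1) (y₀ + 1), |v x y| ≤ M)
    (hN : ∀ x ∈ Set.Icc (x₀ - 1) (x₀ + 1), ∀ y ∈ Set.Icc (y₀ - 1) (y₀ + 1),
      |vxx x y + vyy x y + c * vy x y| ≤ N) :
    |vx x₀ y₀| ≤ (exp (c / 2) * (2 + c ^ 2 / 4) + c / 2) * (M + N) ∧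
      |vy x₀ y₀| ≤ (exp (c / 2) * (2 + c ^ 2 / 4) + c / 2) * (M + N) := by
  have hM0 : 0 ≤ M := (abs_nonneg _).trans (hM x₀ (by simp) y₀ (by simp))
  have hN0 : 0 ≤ N := (abs_nonneg _).trans (hN x₀ (by simp) y₀ (by simp))
  have hexp : ∀ y ∈ Set.Icc (-1 : ℝ) 1, |exp (c / 2 * y)| ≤ exp (c / 2) := fun y hy => by
    rw [abs_exp]
    exact exp_le_exp.2 (by nlinarith [hy.2])
  have hin : ∀ a : ℝ, ∀ x ∈ Set.Icc (-1 : ℝ) 1, a + x ∈ Set.Icc (a - 1) (a + 1) :=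
    fun a x hx => ⟨by linarith [hx.1], by linarith [hx.2]⟩
  have hg := hv.gauge c x₀ y₀
  have hM' : ∀ x ∈ Set.Icc (-1 : ℝ) 1, ∀ y ∈ Set.Icc (-1 : ℝ) 1,
      |exp (c / 2 * y) * v (x₀ + x) (y₀ + y)| ≤ exp (c / 2) * M := fun x hx y hy => by
    rw [abs_mul]
    exact mul_le_mul (hexp y hy) (hM _ (hin _ x hx) _ (hin _ y hy)) (abs_nonneg _) (exp_pos _).le
  have hN' : ∀ x ∈ Set.Icc (-1 : ℝ) 1, ∀ y ∈ Set.Icc (-1 : ℝ) 1,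
      |exp (c / 2 * y) * vxx (x₀ + x) (y₀ + y) + exp (c / 2 * y) * (vyy (x₀ + x) (y₀ + y) +
        c * vy (x₀ + x) (y₀ + y) + c ^ 2 / 4 * v (x₀ + x) (y₀ + y))| ≤
      exp (c / 2) * (N + c ^ 2 / 4 * M) := fun x hx y hy => by
    rw [← mul_add, abs_mul]
    refine mul_le_mul (hexp y hy) ?_ (abs_nonneg _) (exp_pos _).le
    have h1 := hM _ (hin _ x hx) _ (hin _ y hy)
    have h2 := hN _ (hin _ x hx) _ (hin _ y hy)
    have h3 : |c ^ 2 / 4 * v (x₀ + x) (y₀ + y)| ≤ c ^ 2 / 4 * M := by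
      rw [abs_mul, abs_of_nonneg (by positivity : 0 ≤ c ^ 2 / 4)]
      gcongr
    calc _ = |(vxx (x₀ + x) (y₀ + y) + vyy (x₀ + x) (y₀ + y) + c * vy (x₀ + x) (y₀ + y)) +
          c ^ 2 / 4 * v (x₀ + x) (y₀ + y)| := by ring_nf
      _ ≤ _ := (abs_add_le _ _).trans (add_le_add h2 h3)
  have h1 := hg.abs_dx_le hM' hN'
  have h2 := hg.swap.abs_dx_le (fun x hx y hy => hM' y hy x hx)
    (fun x hx y hy => by rw [add_comm]; exact hN' y hy x hx)
  simp only [mul_zero, exp_zero, one_mul, add_zero] at h1 h2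
  have hv0 := hM x₀ (by simp) y₀ (by simp)
  have e1 : 1 ≤ exp (c / 2) := one_le_exp (by positivity)
  have hle : 2 * (exp (c / 2) * M) + exp (c / 2) * (N + c ^ 2 / 4 * M) ≤
      exp (c / 2) * (2 + c ^ 2 / 4) * (M + N) := by
    have : 0 ≤ exp (c / 2) * N * (1 + c ^ 2 / 4) := by positivity
    nlinarith
  have hcM : 0 ≤ c / 2 * M := by positivity
  have hcN : 0 ≤ c / 2 * N := by positivity
  refine ⟨by linarith, ?_⟩
  have h3 : |vy x₀ y₀| ≤ |vy x₀ y₀ + c / 2 * v x₀ y₀| + c / 2 * M := by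
    have : |c / 2 * v x₀ y₀| ≤ c / 2 * M := by
      rw [abs_mul, abs_of_pos (by positivity : 0 < c / 2)]
      gcongr
    calc |vy x₀ y₀| = |(vy x₀ y₀ + c / 2 * v x₀ y₀) - c / 2 * v x₀ y₀| := by ring_nf
      _ ≤ _ := (abs_sub _ _).trans (by linarith)
  linarith

end GradientEstimate

lemma mul_sub_le_of_le_hasDerivAt {f f' : ℝ → ℝ} {a b C : ℝ} (hab : a ≤ b)
    (hf : ∀ x, HasDerivAt f (f' x) x) (hC : ∀ x ∈ Set.Icc a b, C ≤ f' x) :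
    C * (b - a) ≤ f b - f a := by
  refine (convex_Icc a b).mul_sub_le_image_sub_of_le_deriv
    (fun x _ => (hf x).continuousAt.continuousWithinAt)
    (fun x _ => (hf x).differentiableAt.differentiableWithinAt) (fun x hx => ?_)
    a ⟨le_rfl, hab⟩ b ⟨hab, le_rfl⟩ hab
  rw [(hf x).deriv]
  exact hC x (interior_subset hx)

lemma abs_sub_le_of_abs_hasDerivAt_le {f f' : ℝ → ℝ} {C : ℝ} (s : Set ℝ) (hs : Convex ℝ s)
    (hf : ∀ x, HasDerivAt f (f' x) x) (hC : ∀ x ∈ s, |f' x| ≤ C) {a b : ℝ} (ha : a ∈ s)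
    (hb : b ∈ s) : |f b - f a| ≤ C * |b - a| :=
  hs.norm_image_sub_le_of_norm_hasDerivWithin_le (fun x _ => (hf x).hasDerivWithinAt) hC ha hb

lemma hasJet_gaussian (α p q B : ℝ) :
    HasJet (fun x y => exp (-α * ((x - p) ^ 2 + (y - q) ^ 2)) - exp (-α * B))
      (fun x y => -2 * α * (x - p) * exp (-α * ((x - p) ^ 2 + (y - q) ^ 2)))
      (fun x y => -2 * α * (y - q) * exp (-α * ((x - p) ^ 2 + (y - q) ^ 2)))
      (fun x y => (4 * α ^ 2 * (x - p) ^ 2 - 2 * α) *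
        exp (-α * ((x - p) ^ 2 + (y - q) ^ 2)))
      (fun x y => (4 * α ^ 2 * (y - q) ^ 2 - 2 * α) *
        exp (-α * ((x - p) ^ 2 + (y - q) ^ 2))) := by
  have hx : ∀ x y, HasDerivAt (fun t => exp (-α * ((t - p) ^ 2 + (y - q) ^ 2)))
      (-2 * α * (x - p) * exp (-α * ((x - p) ^ 2 + (y - q) ^ 2))) x := fun x y => by
    have h := ((((hasDerivAt_id x).sub_const p).pow 2).add_const ((y - q) ^ 2)).const_mul (-α)
    exact h.exp.congr_deriv (by simp; ring)
  have hy : ∀ x y, HasDerivAt (fun t => exp (-α * ((x - p) ^ 2 + (t - q) ^ 2)))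
      (-2 * α * (y - q) * exp (-α * ((x - p) ^ 2 + (y - q) ^ 2))) y := fun x y => by
    have h := ((((hasDerivAt_id y).sub_const q).pow 2).const_add ((x - p) ^ 2)).const_mul (-α)
    exact h.exp.congr_deriv (by simp; ring)
  refine ⟨by fun_prop, fun x y => (hx x y).sub_const _, fun x y => (hy x y).sub_const _,
    fun x y => ?_, fun x y => ?_⟩
  · exact ((((hasDerivAt_id x).sub_const p).const_mul (-2 * α)).mul (hx x y)).congr_deriv
      (by simp; ring)
  · exact ((((hasDerivAt_id y).sub_const q).const_mul (-2 * α)).mul (hy x y)).congr_deriv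
      (by simp; ring)

/-- A quantitative strong minimum principle: a positive supersolution with bounded gradient which
is very small at a point is small on a whole square around that point. -/
lemma exists_pos_forall_le_of_supersolution {c K M δ R : ℝ} (hc : 0 < c) (hK : 0 < K)
    (hM : 0 < M) (hδ : 0 < δ) (hR : 0 < R) :
    ∃ ε > 0, ∀ w wx wy wxx wyy : ℝ → ℝ → ℝ, HasJet w wx wy wxx wyy → (∀ x y, 0 < w x y) →
      (∀ x y, wxx x y + wyy x y + c * wy x y ≤ K * w x y) →
      (∀ x y, |wx x y| ≤ M) → (∀ x y, |wy x y| ≤ M) →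
      ∀ x₀ y₀, w x₀ y₀ < ε → ∀ x y, |x - x₀| ≤ R → |y - y₀| ≤ R → w x y ≤ δ := by
  set B : ℝ := 2 * R ^ 2 + 1 with hB
  have hB1 : 1 ≤ B := by nlinarith [sq_nonneg R]
  set A : ℝ := (δ / (4 * M)) ^ 2 with hA
  have hA0 : 0 < A := by positivity
  set α : ℝ := (4 + 2 * c * B + K) / (4 * A) + 1 with hα
  have hα1 : 1 ≤ α := by
    have : 0 ≤ (4 + 2 * c * B + K) / (4 * A) := by positivity
    linarith
  have hαA : 4 + 2 * c * B + K ≤ 4 * α * A := by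
    have : 4 * α * A = 4 + 2 * c * B + K + 4 * A := by
      rw [hα]; field_simp
    linarith
  refine ⟨δ / 2 * (exp (-α * (2 * R ^ 2)) - exp (-α * B)), ?_, ?_⟩
  · have : exp (-α * B) < exp (-α * (2 * R ^ 2)) := exp_lt_exp.2 (by nlinarith)
    have : 0 < exp (-α * (2 * R ^ 2)) - exp (-α * B) := by linarith
    positivity
  intro w wx wy wxx wyy hw hpos hsup hwx hwy x₀ y₀ hsmall p q hp hq
  by_contra! hbig
  have hlip : ∀ x y, w p q - w x y ≤ M * |x - p| + M * |y - q| := fun x y => by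
    have h1 := abs_sub_le_of_abs_hasDerivAt_le Set.univ convex_univ (fun t => hw.dx t q)
      (fun t _ => hwx t q) (Set.mem_univ p) (Set.mem_univ x)
    have h2 := abs_sub_le_of_abs_hasDerivAt_le Set.univ convex_univ (fun t => hw.dy x t)
      (fun t _ => hwy x t) (Set.mem_univ q) (Set.mem_univ y)
    linarith [neg_abs_le (w x q - w p q), neg_abs_le (w x y - w x q)]
  have hnear : ∀ x y, (x - p) ^ 2 + (y - q) ^ 2 < A → δ / 2 ≤ w x y := fun x y hxy => by
    have hd : 0 ≤ δ / (4 * M) := by positivity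
    have h1 : |x - p| ≤ δ / (4 * M) := abs_le_of_sq_le_sq (by nlinarith [sq_nonneg (y - q)]) hd
    have h2 : |y - q| ≤ δ / (4 * M) := abs_le_of_sq_le_sq (by nlinarith [sq_nonneg (x - p)]) hd
    have h3 := hlip x y
    have h4 := mul_le_mul_of_nonneg_left h1 hM.le
    have h5 := mul_le_mul_of_nonneg_left h2 hM.le
    have h6 : M * (δ / (4 * M)) = δ / 4 := by field_simp
    linarith
  have hcont : Continuous fun z : ℝ × ℝ => (z.1 - p) ^ 2 + (z.2 - q) ^ 2 := by fun_prop
  have hbdd : ∀ a b : ℝ, a ^ 2 + b ^ 2 ≤ B → |a| ≤ B := fun a b h =>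
    abs_le_of_sq_le_sq (by nlinarith [sq_nonneg b]) (by linarith)
  have hS : IsCompact {z : ℝ × ℝ | (z.1 - p) ^ 2 + (z.2 - q) ^ 2 ≤ B} := by
    refine (isCompact_Icc.prod isCompact_Icc : IsCompact
      (Set.Icc (p - B) (p + B) ×ˢ Set.Icc (q - B) (q + B))).of_isClosed_subset
      (isClosed_le hcont continuous_const) ?_
    rintro ⟨x, y⟩ hxy
    have h1 := abs_le.1 (hbdd _ _ hxy)
    have h2 := abs_le.1 (hbdd _ _ ((add_comm _ _).trans_le hxy))
    simp only at h1 h2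
    exact ⟨⟨by linarith, by linarith⟩, by simp only; linarith, by simp only; linarith⟩
  have key := (hw.sub ((hasJet_gaussian α p q B).const_mul (δ / 2))).nonneg_of_isCompact hS c (by
    intro x y hxy hneg
    simp only [Set.mem_ofPred_eq] at hxy
    have hEB : 0 < exp (-α * B) := exp_pos _
    have hE1 : exp (-α * ((x - p) ^ 2 + (y - q) ^ 2)) ≤ 1 := by
      rw [exp_le_one_iff]
      nlinarith [mul_nonneg (zero_le_one.trans hα1) (add_nonneg (sq_nonneg (x - p))
        (sq_nonneg (y - q)))]
    have hr : A ≤ (x - p) ^ 2 + (y - q) ^ 2 := by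
      by_contra! h
      have h1 := hnear x y h
      have h2 := mul_le_mul_of_nonneg_left hE1 (half_pos hδ).le
      have h3 := mul_pos (half_pos hδ) hEB
      linarith
    have hlt : (x - p) ^ 2 + (y - q) ^ 2 < B := by
      refine lt_of_le_of_ne hxy fun h => ?_
      rw [h] at hneg
      linarith [hpos x y]
    refine ⟨Filter.mem_of_superset ((isOpen_lt hcont continuous_const).mem_nhds hlt)
      fun z hz => Set.mem_ofPred_eq ▸ le_of_lt hz, ?_⟩
    have hyq := (abs_le.1 (hbdd _ _ ((add_comm _ _).trans_le hxy))).2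
    have hb : K ≤ 4 * α ^ 2 * ((x - p) ^ 2 + (y - q) ^ 2) - 4 * α - 2 * α * c * (y - q) := by
      have h1 : 4 * α * A ≤ 4 * α * ((x - p) ^ 2 + (y - q) ^ 2) :=
        mul_le_mul_of_nonneg_left hr (by linarith)
      have h2 : c * (y - q) ≤ c * B := mul_le_mul_of_nonneg_left hyq hc.le
      have h3 : K ≤ 4 * α * ((x - p) ^ 2 + (y - q) ^ 2) - 4 - 2 * (c * (y - q)) := by linarith
      have h4 := mul_le_mul hα1 h3 hK.le (by linarith)
      linarith
    have hE : 0 < exp (-α * ((x - p) ^ 2 + (y - q) ^ 2)) := exp_pos _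
    have h5 := mul_le_mul_of_nonneg_right hb hE.le
    have h6 := hsup x y
    have h7 := mul_le_mul_of_nonneg_left h5 (half_pos hδ).le
    have h8 := mul_neg_of_pos_of_neg hK hneg
    have h9 : 0 < δ / 2 * (K * exp (-α * B)) := by positivity
    linarith)
  have h1 := sq_le_sq' (neg_le_of_abs_le hp) (le_of_abs_le hp)
  have h2 := sq_le_sq' (neg_le_of_abs_le hq) (le_of_abs_le hq)
  have h3 : (x₀ - p) ^ 2 + (y₀ - q) ^ 2 ≤ 2 * R ^ 2 := by nlinarith
  have h4 := key x₀ y₀ (h3.trans (by linarith))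
  have h5 : exp (-α * (2 * R ^ 2)) ≤ exp (-α * ((x₀ - p) ^ 2 + (y₀ - q) ^ 2)) :=
    exp_le_exp.2 (by nlinarith)
  have h6 := mul_le_mul_of_nonneg_left h5 (half_pos hδ).le
  linarith

section OneDimensional

variable {F : ℝ → ℝ}

lemma UnbalancedDoubleWell.hasDerivAt (hF : UnbalancedDoubleWell F) (s : ℝ) :
    HasDerivAt F (deriv F s) s :=
  (hF.1.differentiable (by norm_num) s).hasDerivAt

lemma UnbalancedDoubleWell.continuous_deriv (hF : UnbalancedDoubleWell F) :
    Continuous (deriv F) :=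
  hF.1.continuous_deriv (by norm_num)

lemma UnbalancedDoubleWell.strictMonoOn (hF : UnbalancedDoubleWell F) :
    StrictMonoOn F (Set.Icc (-1) 0) :=
  strictMonoOn_of_deriv_pos (convex_Icc _ _) hF.1.continuous.continuousOn fun s hs =>
    hF.2.2.2.2.2.1 s (by simpa using hs)

lemma UnbalancedDoubleWell.strictAntiOn (hF : UnbalancedDoubleWell F) :
    StrictAntiOn F (Set.Icc 0 1) :=
  strictAntiOn_of_deriv_neg (convex_Icc _ _) hF.1.continuous.continuousOn fun s hs =>
    hF.2.2.2.2.2.2.1 s (by simpa using hs)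

lemma UnbalancedDoubleWell.lt_zero (hF : UnbalancedDoubleWell F) : F 1 < F 0 :=
  hF.strictAntiOn (by simp) (by simp) zero_lt_one

/-- Away from `s = 1`, the relative potential plus a small multiple of its derivative is bounded
below by a positive constant wherever the relative potential is not too negative. -/
lemma UnbalancedDoubleWell.exists_coercive (hF : UnbalancedDoubleWell F) {σ : ℝ}
    (hσ : 0 < σ) (hσ1 : σ < 1) :
    ∃ l > 0, ∃ η > 0, ∃ κ > 0, ∀ s ∈ Set.Icc (-1) (1 - σ), -η ≤ F s - F 1 →
      κ ≤ F s - F 1 + l * deriv F s := by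
  have hF1 : F (-1) < F 1 := by rw [hF.2.2.2.2.2.2.2.1]; exact hF.2.2.2.2.2.2.2.2
  have hmono := hF.strictMonoOn
  have hanti := hF.strictAntiOn
  obtain ⟨a, ha, hFa⟩ := intermediate_value_Icc (by norm_num : (-1 : ℝ) ≤ 0)
    hF.1.continuous.continuousOn ⟨hF1.le, hF.lt_zero.le⟩
  have ha0 : -1 < a := lt_of_le_of_ne ha.1 (by rintro rfl; linarith)
  have ha1 : a < 0 := lt_of_le_of_ne ha.2 (by rintro rfl; linarith [hF.lt_zero])
  set s₁ := (a - 1) / 2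
  set s₂ := a / 2
  have hs1 : F s₁ < F 1 := hFa ▸ hmono ⟨by simp only [s₁]; linarith, by simp only [s₁]; linarith⟩ ha
    (by simp only [s₁]; linarith)
  have hs2 : F 1 < F s₂ := hFa ▸ hmono ha ⟨by simp only [s₂]; linarith, by simp only [s₂]; linarith⟩
    (by simp only [s₂]; linarith)
  have hs3 : F 1 < F (1 - σ) := hanti ⟨by linarith, by linarith⟩ (by simp) (by linarith)
  have h12 : s₁ ≤ s₂ := by simp only [s₁, s₂]; linarith
  obtain ⟨t, ht, hmin⟩ := isCompact_Icc.exists_isMinOn (Set.nonempty_Icc.2 h12)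
    hF.continuous_deriv.continuousOn
  have hm : 0 < deriv F t := hF.2.2.2.2.2.1 t
    ⟨by have := ht.1; simp only [s₁] at this; linarith,
     by have := ht.2; simp only [s₂] at this; linarith⟩
  obtain ⟨K, hK⟩ := isCompact_Icc.exists_bound_of_continuousOn (s := Set.Icc (-1 : ℝ) 1)
    hF.continuous_deriv.continuousOn
  have hK0 : 0 ≤ K := (norm_nonneg _).trans (hK 0 (by simp))
  set g := min (F s₂ - F 1) (F (1 - σ) - F 1) with hg
  have hg0 : 0 < g := lt_min (by linarith) (by linarith)
  set l := g / (2 * (K + 1)) with hl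
  have hl0 : 0 < l := by positivity
  have hlK : l * K ≤ g / 2 := by
    have : l * (K + 1) = g / 2 := by rw [hl]; field_simp
    nlinarith
  refine ⟨l, hl0, min (l * deriv F t / 2) ((F 1 - F s₁) / 2), lt_min (by positivity) (by linarith),
    min (l * deriv F t / 2) (g / 2), lt_min (by positivity) (by positivity), ?_⟩
  intro s hs hη
  have hs_le : s₁ ≤ s := by
    by_contra! h
    have : F s < F s₁ := hmono ⟨hs.1, by simp only [s₁] at h; linarith⟩
      ⟨by simp only [s₁]; linarith, by simp only [s₁]; linarith⟩ h
    have h2 := min_le_right (l * deriv F t / 2) ((F 1 - F s₁) / 2)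
    linarith
  rcases le_total s s₂ with h | h
  · have h1 : deriv F t ≤ deriv F s := hmin ⟨hs_le, h⟩
    have h2 := min_le_left (l * deriv F t / 2) ((F 1 - F s₁) / 2)
    have h3 := min_le_left (l * deriv F t / 2) (g / 2)
    have h4 := mul_le_mul_of_nonneg_left h1 hl0.le
    linarith
  · have h1 : g ≤ F s - F 1 := by
      rcases le_total s 0 with h0 | h0
      · have := hmono.monotoneOn ⟨by simp only [s₂]; linarith, by simp only [s₂]; linarith⟩
          ⟨hs.1, h0⟩ h
        linarith [min_le_left (F s₂ - F 1) (F (1 - σ) - F 1)]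
      · have := hanti.antitoneOn ⟨h0, by linarith [hs.2]⟩ ⟨by linarith, by linarith⟩ hs.2
        linarith [min_le_right (F s₂ - F 1) (F (1 - σ) - F 1)]
    have h2 := neg_le_of_abs_le (hK s ⟨hs.1, by linarith [hs.2]⟩)
    have h3 := mul_le_mul_of_nonneg_left h2 hl0.le
    have h4 := min_le_right (l * deriv F t / 2) (g / 2)
    linarith

lemma mul_le_one_of_sq_le_deriv_sq {U U' : ℝ → ℝ} {m R : ℝ} (hU : ∀ x, HasDerivAt U (U' x) x)
    (hU' : Continuous U') (h0 : U 0 = 0) (h1 : ∀ x, U x ≤ 1) (hm : 0 < m) (hR : 0 ≤ R)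
    (hd : 0 ≤ U' 0) (h : ∀ x ∈ Set.Icc 0 R, 0 ≤ U x → m ^ 2 ≤ U' x ^ 2) : m * R ≤ 1 := by
  have hpos : ∀ x ∈ Set.Icc 0 R, 0 < U' x := by
    by_contra! hex
    obtain ⟨x, hx, hxn⟩ := hex
    have hcomp : IsCompact (Set.Icc 0 R ∩ U' ⁻¹' Set.Iic 0) :=
      isCompact_Icc.inter_right (isClosed_Iic.preimage hU')
    obtain ⟨t, ⟨ht, htn⟩, hleast⟩ := hcomp.exists_isLeast ⟨x, hx, hxn⟩
    simp only [Set.mem_preimage, Set.mem_Iic] at htn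
    have hUt : 0 ≤ U t := by
      have hmon : MonotoneOn U (Set.Icc 0 t) := by
        refine monotoneOn_of_deriv_nonneg (convex_Icc _ _)
          (fun x _ => (hU x).continuousAt.continuousWithinAt)
          (fun x _ => (hU x).differentiableAt.differentiableWithinAt) fun s hs => ?_
        rw [interior_Icc] at hs
        rw [(hU s).deriv]
        by_contra! hneg
        exact absurd (hleast ⟨⟨hs.1.le, hs.2.le.trans ht.2⟩, hneg.le⟩) (not_le.2 hs.2)
      have := hmon (Set.left_mem_Icc.2 ht.1) (Set.right_mem_Icc.2 ht.1) ht.1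
      linarith
    obtain ⟨z, hz, hz0⟩ := intermediate_value_Icc' ht.1 hU'.continuousOn ⟨htn, hd⟩
    have hzt : z = t := le_antisymm hz.2 (hleast ⟨⟨hz.1, hz.2.trans ht.2⟩, hz0.le⟩)
    have := h t ht hUt
    rw [← hzt, hz0] at this
    nlinarith
  have hUnn : ∀ x ∈ Set.Icc 0 R, 0 ≤ U x := fun x hx => by
    have := mul_sub_le_of_le_hasDerivAt hx.1 hU (C := 0)
      (fun s hs => (hpos s ⟨hs.1, hs.2.trans hx.2⟩).le)
    linarith
  have := mul_sub_le_of_le_hasDerivAt hR hU (C := m)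
    (fun s hs => le_of_sq_le_sq (h s hs (hUnn s hs)) (hpos s hs).le)
  linarith [h1 R]

set_option maxHeartbeats 1000000 in
/-- For an approximate solution of the profile equation starting at the local maximum `0` of the
potential, the energy accumulated relative to the state `1` is strictly positive on some
interval, up to a multiple of the distance to `1` at the end of the interval. -/
lemma UnbalancedDoubleWell.exists_energy_gain (hF : UnbalancedDoubleWell F) {M : ℝ}
    (hM : 0 < M) :
    ∃ κ > 0, ∃ R > 0, ∃ δ > 0, ∀ U U' U'' : ℝ → ℝ, (∀ x, HasDerivAt U (U' x) x) →
      (∀ x, HasDerivAt U' (U'' x) x) → (∀ x, |U x| ≤ 1) → (∀ x, |U' x| ≤ M) → U 0 = 0 →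
      (∀ x, |x| ≤ R → |U'' x - deriv F (U x)| ≤ δ) →
      ∃ b ∈ Set.Icc 0 R,
        κ + M * (1 - U b) ≤ ∫ x in (0 : ℝ)..b, (F (U x) - F 1 + U' x ^ 2 / 2) := by
  set g := F 0 - F 1 with hg
  have hg0 : 0 < g := sub_pos.2 hF.lt_zero
  obtain ⟨r, hr0, hr⟩ := Metric.continuousAt_iff.1
    (hF.1.continuous.continuousAt (x := (0 : ℝ))) (g / 2) (half_pos hg0)
  set ρ := min r 1 / (4 * M) with hρ
  have hmin0 : 0 < min r 1 := lt_min hr0 one_pos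
  have hρ0 : 0 < ρ := by positivity
  have hMρ : M * ρ = min r 1 / 4 := by rw [hρ]; field_simp
  set σ := min (1 / 2) (ρ * g / (8 * M)) with hσ
  have hσ0 : 0 < σ := lt_min (by norm_num) (by positivity)
  have hσ1 : σ ≤ 1 / 2 := min_le_left _ _
  have hMσ : M * σ ≤ ρ * g / 8 := by
    have h1 := mul_le_mul_of_nonneg_left (min_le_right (1 / 2) (ρ * g / (8 * M))) hM.le
    have h2 : M * (ρ * g / (8 * M)) = ρ * g / 8 := by field_simp
    linarith
  obtain ⟨l, hl, η, hη, κ, hκ, hcoer⟩ := hF.exists_coercive hσ0 (by linarith : σ < 1)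
  set R₁ := ρ + 2 * (2 * M * l + 2 * M + ρ * g / 8) / κ with hR₁
  have hR₁0 : ρ ≤ R₁ := by
    have : 0 ≤ 2 * (2 * M * l + 2 * M + ρ * g / 8) / κ := by positivity
    linarith
  have hR₁pos : 0 < R₁ := hρ0.trans_le hR₁0
  have hκR : 2 * M * l + 2 * M + ρ * g / 8 ≤ κ / 2 * R₁ := by
    have : κ / 2 * R₁ = κ / 2 * ρ + (2 * M * l + 2 * M + ρ * g / 8) := by rw [hR₁]; field_simp
    have : 0 < κ / 2 * ρ := by positivity
    linarith
  set η₂ := min η (ρ * g / (4 * R₁)) with hη₂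
  have hη₂0 : 0 < η₂ := lt_min hη (by positivity)
  have hRη : R₁ * η₂ ≤ ρ * g / 4 := by
    have h1 := mul_le_mul_of_nonneg_left (min_le_right η (ρ * g / (4 * R₁))) hR₁pos.le
    have h2 : R₁ * (ρ * g / (4 * R₁)) = ρ * g / 4 := by field_simp
    linarith
  set m := min 1 (η₂ / 2) with hm
  have hm0 : 0 < m := lt_min one_pos (half_pos hη₂0)
  have hm2 : m ^ 2 ≤ η₂ / 2 := by
    have h1 := min_le_left 1 (η₂ / 2)
    have h2 := min_le_right 1 (η₂ / 2)
    nlinarith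
  set R := R₁ + 2 / m with hR
  have hR0 : R₁ ≤ R := by
    have : 0 < 2 / m := by positivity
    linarith
  have hRpos : 0 < R := hR₁pos.trans_le hR0
  have hmR : 1 < m * R := by
    have : m * R = m * R₁ + 2 := by rw [hR]; field_simp
    nlinarith [mul_pos hm0 hR₁pos]
  set δ := min (η₂ / (4 * (M * R))) (κ / (2 * l)) with hδ
  have hδ0 : 0 < δ := lt_min (by positivity) (by positivity)
  have hδR : M * δ * R ≤ η₂ / 4 := by
    have h1 := mul_le_mul_of_nonneg_left (min_le_left (η₂ / (4 * (M * R))) (κ / (2 * l)))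
      (mul_pos hM hRpos).le
    have h2 : M * R * (η₂ / (4 * (M * R))) = η₂ / 4 := by field_simp
    linarith
  have hlδ : l * δ ≤ κ / 2 := by
    have h1 := mul_le_mul_of_nonneg_left (min_le_right (η₂ / (4 * (M * R))) (κ / (2 * l))) hl.le
    have h2 : l * (κ / (2 * l)) = κ / 2 := by field_simp
    linarith
  refine ⟨ρ * g / 8, by positivity, R, hRpos, δ, hδ0, ?_⟩
  intro U U' U'' hU hU' hU1 hUM hU0 hode
  have hU'c : Continuous U' := continuous_iff_continuousAt.2 fun x => (hU' x).continuousAt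
  have hUc : Continuous U := continuous_iff_continuousAt.2 fun x => (hU x).continuousAt
  have hE : ∀ x, HasDerivAt (fun x => U' x ^ 2 / 2 - (F (U x) - F 1))
      (U' x * (U'' x - deriv F (U x))) x := fun x => by
    have h1 := ((hU' x).pow 2).div_const 2
    have h2 := ((hF.hasDerivAt (U x)).comp x (hU x)).sub_const (F 1)
    exact (h1.sub h2).congr_deriv (by simp; ring)
  have hEb : ∀ x, |x| ≤ R → |(U' x ^ 2 / 2 - (F (U x) - F 1)) - (U' 0 ^ 2 / 2 - (F (U 0) - F 1))|
      ≤ η₂ / 4 := fun x hx => by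
    have h := abs_sub_le_of_abs_hasDerivAt_le (Set.Icc (-R) R) (convex_Icc _ _) hE
      (C := M * δ) (fun s hs => by
        rw [abs_mul]
        exact mul_le_mul (hUM s) (hode s (abs_le.2 hs)) (abs_nonneg _) hM.le)
      (a := 0) (b := x) ⟨by linarith, hRpos.le⟩ (abs_le.1 hx)
    rw [sub_zero] at h
    exact h.trans ((mul_le_mul_of_nonneg_left hx (by positivity)).trans hδR)
  have hFnn : ∀ x, 0 ≤ U x → 0 ≤ F (U x) - F 1 := fun x hx => sub_nonneg.2
    (hF.strictAntiOn.antitoneOn ⟨hx, (abs_le.1 (hU1 x)).2⟩ (by simp) (abs_le.1 (hU1 x)).2)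
  have hE0 : U' 0 ^ 2 / 2 - (F (U 0) - F 1) ≤ η₂ / 2 := by
    by_contra! hgt
    have hsq : ∀ x, |x| ≤ R → 0 ≤ U x → m ^ 2 ≤ U' x ^ 2 := fun x hx hUx => by
      have h1 := abs_le.1 (hEb x hx)
      have h2 := hFnn x hUx
      linarith [h1.1]
    rcases le_total 0 (U' 0) with hs | hs
    · have := mul_le_one_of_sq_le_deriv_sq hU hU'c hU0 (fun x => (abs_le.1 (hU1 x)).2) hm0 hRpos.le
        hs (fun x hx => hsq x (by rw [abs_of_nonneg hx.1]; exact hx.2))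
      linarith
    · have := mul_le_one_of_sq_le_deriv_sq (U := fun x => U (-x)) (U' := fun x => -U' (-x))
        (fun x => ((hU (-x)).scomp x (hasDerivAt_neg x)).congr_deriv (by simp))
        (by fun_prop) (by simpa using hU0) (fun x => (abs_le.1 (hU1 (-x))).2) hm0 hRpos.le
        (by simpa using hs) (fun x hx h => by
          rw [neg_sq]
          exact hsq (-x) (by rw [abs_neg, abs_of_nonneg hx.1]; exact hx.2) h)
      linarith
  have hlow : ∀ x, |x| ≤ R → -η₂ ≤ F (U x) - F 1 := fun x hx => by
    have h1 := (abs_le.1 (hEb x hx)).2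
    nlinarith [sq_nonneg (U' x)]
  have hcont : Continuous fun x => F (U x) - F 1 + U' x ^ 2 / 2 := by
    have := hF.1.continuous
    fun_prop
  have hJ : ∀ x, HasDerivAt (fun x => ∫ t in (0 : ℝ)..x, (F (U t) - F 1 + U' t ^ 2 / 2))
      (F (U x) - F 1 + U' x ^ 2 / 2) x := fun x => (hcont.integral_hasStrictDerivAt 0 x).hasDerivAt
  by_cases hb : ∃ b ∈ Set.Icc 0 R₁, 1 - σ < U b
  · obtain ⟨b, hb, hUb⟩ := hb
    refine ⟨b, ⟨hb.1, hb.2.trans hR0⟩, ?_⟩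
    have hUx : ∀ x, 0 ≤ x → |U x| ≤ M * x := fun x hx => by
      have h := abs_sub_le_of_abs_hasDerivAt_le Set.univ convex_univ hU (fun s _ => hUM s)
        (Set.mem_univ 0) (Set.mem_univ x)
      rwa [hU0, sub_zero, sub_zero, abs_of_nonneg hx] at h
    have hρb : ρ ≤ b := by
      by_contra! h
      have h1 := (abs_le.1 (hUx b hb.1)).2
      have h2 := mul_lt_mul_of_pos_left h hM
      linarith [min_le_right r 1]
    have hJ1 := mul_sub_le_of_le_hasDerivAt hρ0.le hJ (C := g / 2) (fun x hx => by
      have h1 := hUx x hx.1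
      have h2 := mul_le_mul_of_nonneg_left hx.2 hM.le
      have h3 := hr (x := U x) (by
        rw [dist_zero_right, norm_eq_abs]
        linarith [min_le_left r 1])
      rw [dist_eq, abs_lt] at h3
      nlinarith [sq_nonneg (U' x), h3.1])
    have hJ2 := mul_sub_le_of_le_hasDerivAt hρb hJ (C := -η₂) (fun x hx => by
      have := hlow x (abs_le.2 ⟨by linarith [hx.1], by linarith [hx.2, hb.2]⟩)
      nlinarith [sq_nonneg (U' x)])
    rw [intervalIntegral.integral_same] at hJ1
    have h1 : η₂ * (b - ρ) ≤ R₁ * η₂ := by nlinarith [hb.2]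
    have h2 : M * (1 - U b) ≤ M * σ := mul_le_mul_of_nonneg_left (by linarith) hM.le
    linarith
  · push Not at hb
    refine ⟨R₁, ⟨hR₁pos.le, hR0⟩, ?_⟩
    have hJ1 := mul_sub_le_of_le_hasDerivAt hR₁pos.le
      (fun x => (hJ x).add ((hU' x).const_mul l)) (C := κ / 2) (fun x hx => by
        have hxR : |x| ≤ R := abs_le.2 ⟨by linarith [hx.1], by linarith [hx.2]⟩
        have h1 := hcoer (U x) ⟨(abs_le.1 (hU1 x)).1, hb x hx⟩
          (by linarith [hlow x hxR, min_le_left η (ρ * g / (4 * R₁))])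
        have h2 := mul_le_mul_of_nonneg_left (abs_le.1 (hode x hxR)).1 hl.le
        nlinarith [sq_nonneg (U' x)])
    simp only [Pi.add_apply, intervalIntegral.integral_same] at hJ1
    have h1 := mul_le_mul_of_nonneg_left (abs_le.1 (hUM 0)).1 hl.le
    have h2 := mul_le_mul_of_nonneg_left (abs_le.1 (hUM R₁)).2 hl.le
    have h3 : M * (1 - U R₁) ≤ 2 * M := by nlinarith [(abs_le.1 (hU1 R₁)).1]
    linarith

end OneDimensional

section PartialDerivatives

variable {u : ℝ → ℝ → ℝ}

lemma hasDerivAt_fst_of_differentiableAt {f : ℝ × ℝ → ℝ} {x y : ℝ}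
    (hf : DifferentiableAt ℝ f (x, y)) :
    HasDerivAt (fun t => f (t, y)) (fderiv ℝ f (x, y) (1, 0)) x :=
  hf.hasFDerivAt.comp_hasDerivAt x ((hasDerivAt_id x).prodMk (hasDerivAt_const x y))

lemma hasDerivAt_snd_of_differentiableAt {f : ℝ × ℝ → ℝ} {x y : ℝ}
    (hf : DifferentiableAt ℝ f (x, y)) :
    HasDerivAt (fun t => f (x, t)) (fderiv ℝ f (x, y) (0, 1)) y :=
  hf.hasFDerivAt.comp_hasDerivAt y ((hasDerivAt_const y x).prodMk (hasDerivAt_id y))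

lemma pdx_eq_fderiv (hu : Differentiable ℝ fun p : ℝ × ℝ => u p.1 p.2) (x y : ℝ) :
    pdx u x y = fderiv ℝ (fun p : ℝ × ℝ => u p.1 p.2) (x, y) (1, 0) :=
  (hasDerivAt_fst_of_differentiableAt (hu (x, y))).deriv

lemma pdy_eq_fderiv (hu : Differentiable ℝ fun p : ℝ × ℝ => u p.1 p.2) (x y : ℝ) :
    pdy u x y = fderiv ℝ (fun p : ℝ × ℝ => u p.1 p.2) (x, y) (0, 1) :=
  (hasDerivAt_snd_of_differentiableAt (hu (x, y))).deriv

lemma hasDerivAt_pdx (hu : Differentiable ℝ fun p : ℝ × ℝ => u p.1 p.2) (x y : ℝ) :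
    HasDerivAt (fun t => u t y) (pdx u x y) x := by
  rw [pdx_eq_fderiv hu]
  exact hasDerivAt_fst_of_differentiableAt (hu (x, y))

lemma hasDerivAt_pdy (hu : Differentiable ℝ fun p : ℝ × ℝ => u p.1 p.2) (x y : ℝ) :
    HasDerivAt (fun t => u x t) (pdy u x y) y := by
  rw [pdy_eq_fderiv hu]
  exact hasDerivAt_snd_of_differentiableAt (hu (x, y))

lemma contDiff_pdx {n : ℕ} (hu : ContDiff ℝ (n + 1) fun p : ℝ × ℝ => u p.1 p.2) :
    ContDiff ℝ n fun p : ℝ × ℝ => pdx u p.1 p.2 := by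
  simp_rw [pdx_eq_fderiv (hu.differentiable (by simp))]
  exact (hu.fderiv_right le_rfl).clm_apply contDiff_const

lemma contDiff_pdy {n : ℕ} (hu : ContDiff ℝ (n + 1) fun p : ℝ × ℝ => u p.1 p.2) :
    ContDiff ℝ n fun p : ℝ × ℝ => pdy u p.1 p.2 := by
  simp_rw [pdy_eq_fderiv (hu.differentiable (by simp))]
  exact (hu.fderiv_right le_rfl).clm_apply contDiff_const

lemma pdx_pdy_comm (hu : ContDiff ℝ 2 fun p : ℝ × ℝ => u p.1 p.2) (x y : ℝ) :
    pdx (pdy u) x y = pdy (pdx u) x y := by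
  have hd : Differentiable ℝ fun p : ℝ × ℝ => u p.1 p.2 := hu.differentiable (by simp)
  have hd2 : Differentiable ℝ (fderiv ℝ fun p : ℝ × ℝ => u p.1 p.2) :=
    (hu.fderiv_right (m := 1) (by norm_num)).differentiable (by simp)
  have hx := contDiff_pdx (n := 1) (by simpa [one_add_one_eq_two] using hu)
  have hy := contDiff_pdy (n := 1) (by simpa [one_add_one_eq_two] using hu)
  rw [pdx_eq_fderiv (hy.differentiable (by simp)), pdy_eq_fderiv (hx.differentiable (by simp))]
  simp_rw [pdx_eq_fderiv hd, pdy_eq_fderiv hd]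
  rw [fderiv_clm_apply (hd2 _) (differentiableAt_const _),
    fderiv_clm_apply (hd2 _) (differentiableAt_const _)]
  simpa using (hu.contDiffAt (x := (x, y))).isSymmSndFDerivAt (by simp) (1, 0) (0, 1)

lemma hasJet_of_contDiff (hu : ContDiff ℝ 2 fun p : ℝ × ℝ => u p.1 p.2) :
    HasJet u (pdx u) (pdy u) (pdxx u) (pdyy u) where
  cont := hu.continuous
  dx := hasDerivAt_pdx (hu.differentiable (by simp))
  dy := hasDerivAt_pdy (hu.differentiable (by simp))
  dxx := hasDerivAt_pdx ((contDiff_pdx (n := 1)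
    (by simpa [one_add_one_eq_two] using hu)).differentiable (by simp))
  dyy := hasDerivAt_pdy ((contDiff_pdy (n := 1)
    (by simpa [one_add_one_eq_two] using hu)).differentiable (by simp))

end PartialDerivatives

namespace IsSolution

variable {F : ℝ → ℝ} {c : ℝ} {u : ℝ → ℝ → ℝ}

lemma contDiff_two (hu : IsSolution F c u) : ContDiff ℝ 2 fun p : ℝ × ℝ => u p.1 p.2 :=
  hu.1.of_le (by norm_num)

lemma contDiff_pdx (hu : IsSolution F c u) : ContDiff ℝ 2 fun p : ℝ × ℝ => pdx u p.1 p.2 :=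
  _root_.contDiff_pdx (n := 2) (by convert hu.1 using 1; norm_num)

lemma contDiff_pdy (hu : IsSolution F c u) : ContDiff ℝ 2 fun p : ℝ × ℝ => pdy u p.1 p.2 :=
  _root_.contDiff_pdy (n := 2) (by convert hu.1 using 1; norm_num)

lemma hasJet (hu : IsSolution F c u) : HasJet u (pdx u) (pdy u) (pdxx u) (pdyy u) :=
  hasJet_of_contDiff hu.contDiff_two

lemma hasJet_pdy (hu : IsSolution F c u) :
    HasJet (pdy u) (pdx (pdy u)) (pdyy u) (pdxx (pdy u)) (pdyy (pdy u)) :=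
  hasJet_of_contDiff hu.contDiff_pdy

/-- The linearized equation satisfied by the derivative in the direction of propagation. -/
lemma linearized (hF : ContDiff ℝ 3 F) (hu : IsSolution F c u) (x y : ℝ) :
    pdxx (pdy u) x y + pdyy (pdy u) x y + c * pdyy u x y =
      deriv (deriv F) (u x y) * pdy u x y := by
  have hcomm : pdy (pdx u) = pdx (pdy u) :=
    funext fun x => funext fun y => (pdx_pdy_comm hu.contDiff_two x y).symm
  have hxx : HasDerivAt (fun t => pdxx u x t) (pdxx (pdy u) x y) y := by
    have h1 := hasDerivAt_pdy ((_root_.contDiff_pdx (n := 1)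
      (by simpa [one_add_one_eq_two] using hu.contDiff_pdx)).differentiable (by simp)) x y
    rw [← pdx_pdy_comm hu.contDiff_pdx, hcomm] at h1
    exact h1
  have hl := (hxx.add (hu.hasJet_pdy.dyy x y)).add ((hu.hasJet_pdy.dy x y).const_mul c)
  have hd2 : HasDerivAt (deriv F) (deriv (deriv F) (u x y)) (u x y) :=
    ((hF.deriv' (n := 2)).differentiable (by simp) _).hasDerivAt
  have hr := hd2.comp y (hu.hasJet.dy x y)
  exact (hl.congr_of_eventuallyEq (Eventually.of_forall fun t => (hu.2.1 x t).symm)).unique hr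

/-- Global bounds for a solution. -/
lemma exists_bounds (hF : ContDiff ℝ 3 F) (hc : 0 < c) (hu : IsSolution F c u) :
    ∃ K > 0, ∃ M > 0, (∀ x y, |deriv (deriv F) (u x y)| ≤ K) ∧ (∀ x y, |pdx u x y| ≤ M) ∧
      (∀ x y, |pdy u x y| ≤ M) ∧ (∀ x y, |pdx (pdy u) x y| ≤ M) ∧ (∀ x y, |pdyy u x y| ≤ M) ∧
      (∀ x y, |pdxx u x y| ≤ M) := by
  obtain ⟨K₁, hK₁⟩ := isCompact_Icc.exists_bound_of_continuousOn (s := Set.Icc (-1 : ℝ) 1)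
    (hF.continuous_deriv (by norm_num)).continuousOn
  obtain ⟨K₂, hK₂⟩ := isCompact_Icc.exists_bound_of_continuousOn (s := Set.Icc (-1 : ℝ) 1)
    ((hF.deriv' (n := 2)).continuous_deriv (by norm_num)).continuousOn
  have hK₁' : ∀ x y, |deriv F (u x y)| ≤ K₁ := fun x y => hK₁ _ (abs_le.1 (hu.2.2.1 x y))
  have hK₂' : ∀ x y, |deriv (deriv F) (u x y)| ≤ K₂ := fun x y => hK₂ _ (abs_le.1 (hu.2.2.1 x y))
  have h1 := fun x y => hu.hasJet.abs_gradient_le hc x y (M := 1) (N := K₁)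
    (fun a _ b _ => hu.2.2.1 a b) (fun a _ b _ => by rw [hu.2.1]; exact hK₁' a b)
  set M₁ := (exp (c / 2) * (2 + c ^ 2 / 4) + c / 2) * (1 + K₁)
  have hK₁0 : 0 ≤ K₁ := (abs_nonneg _).trans (hK₁' 0 0)
  have hK₂0 : 0 ≤ K₂ := (abs_nonneg _).trans (hK₂' 0 0)
  have hM₁0 : 0 ≤ M₁ := (abs_nonneg _).trans (h1 0 0).1
  have h2 := fun x y => hu.hasJet_pdy.abs_gradient_le hc x y (M := M₁) (N := K₂ * M₁)
    (fun a _ b _ => (h1 a b).2) (fun a _ b _ => by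
      rw [hu.linearized hF, abs_mul]
      exact mul_le_mul (hK₂' a b) (h1 a b).2 (abs_nonneg _) hK₂0)
  set M₂ := (exp (c / 2) * (2 + c ^ 2 / 4) + c / 2) * (M₁ + K₂ * M₁)
  have hM₂0 : 0 ≤ M₂ := (abs_nonneg _).trans (h2 0 0).1
  have hcM : 0 ≤ c * M₁ := by positivity
  refine ⟨K₂ + 1, by linarith, K₁ + c * M₁ + M₁ + M₂ + 1, by linarith,
    fun x y => by linarith [hK₂' x y], fun x y => by linarith [(h1 x y).1],
    fun x y => by linarith [(h1 x y).2], fun x y => by linarith [(h2 x y).1],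
    fun x y => by linarith [(h2 x y).2], fun x y => ?_⟩
  have h3 := abs_le.1 (h1 x y).2
  have h4 := abs_le.1 (h2 x y).2
  have h5 := abs_le.1 (hK₁' x y)
  have h6 := hu.2.1 x y
  have h7 := mul_le_mul_of_nonneg_left h3.1 hc.le
  have h8 := mul_le_mul_of_nonneg_left h3.2 hc.le
  exact abs_le.2 ⟨by linarith [h4.2, h5.1], by linarith [h4.1, h5.2]⟩

end IsSolution

lemma tendsto_pdx_of_tendsto {u : ℝ → ℝ → ℝ} {M l : ℝ} (hM : 0 < M)
    (hjet : HasJet u (pdx u) (pdy u) (pdxx u) (pdyy u)) (hb : ∀ x y, |pdxx u x y| ≤ M)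
    (hlim : ∀ x, Tendsto (fun y => u x y) atTop (nhds l)) (x : ℝ) :
    Tendsto (fun y => pdx u x y) atTop (nhds 0) := by
  rw [Metric.tendsto_nhds]
  intro ε hε
  set h := ε / (2 * M) with hh
  have hh0 : 0 < h := by positivity
  have hMh : M * h = ε / 2 := by rw [hh]; field_simp
  have hd : Tendsto (fun y => u (x + h) y - u x y) atTop (nhds 0) := by
    simpa using (hlim (x + h)).sub (hlim x)
  filter_upwards [Metric.tendsto_nhds.1 hd (ε / 2 * h) (by positivity)] with y hy
  rw [dist_zero_right, norm_eq_abs] at hy ⊢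
  obtain ⟨ξ, hξ, hslope⟩ := exists_hasDerivAt_eq_slope (fun t => u t y) (fun t => pdx u t y)
    (by linarith : x < x + h)
    (fun t _ => (hjet.dx t y).continuousAt.continuousWithinAt) (fun t _ => hjet.dx t y)
  have h1 := abs_sub_le_of_abs_hasDerivAt_le Set.univ convex_univ (fun t => hjet.dxx t y)
    (fun t _ => hb t y) (Set.mem_univ ξ) (Set.mem_univ x)
  have h2 : |x - ξ| ≤ h := abs_le.2 ⟨by linarith [hξ.2], by linarith [hξ.1]⟩
  have h3 : |pdx u ξ y| < ε / 2 := by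
    rw [hslope, add_sub_cancel_left, abs_div, abs_of_pos hh0, div_lt_iff₀ hh0]
    exact hy
  have h4 := mul_le_mul_of_nonneg_left h2 hM.le
  have h5 := abs_le.1 h1
  have h6 := abs_lt.1 h3
  exact abs_lt.2 ⟨by linarith [h5.1, h6.1], by linarith [h5.2, h6.2]⟩

section EnergyInequality

variable {F : ℝ → ℝ} {c : ℝ} {u : ℝ → ℝ → ℝ}

/-- Integrated form of `∂_x (u_x u_y) + ∂_y ((u_y² - u_x²) / 2 - F(u)) = -c u_y² ≤ 0`. -/
lemma IsSolution.integral_flux_le (hF : ContDiff ℝ 3 F) (hc : 0 < c) (hu : IsSolution F c u)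
    {a b y₀ Y : ℝ} (hab : a ≤ b) (hY : y₀ ≤ Y) :
    (∫ x in a..b, ((pdy u x Y ^ 2 - pdx u x Y ^ 2) / 2 - F (u x Y))) -
      (∫ x in a..b, ((pdy u x y₀ ^ 2 - pdx u x y₀ ^ 2) / 2 - F (u x y₀))) +
      (∫ y in y₀..Y, pdx u b y * pdy u b y) - ∫ y in y₀..Y, pdx u a y * pdy u a y ≤ 0 := by
  have hFu : ContDiff ℝ 2 fun p : ℝ × ℝ => F (u p.1 p.2) :=
    (hF.of_le (by norm_num)).comp hu.contDiff_two
  have hf : ContDiff ℝ 2 fun p : ℝ × ℝ => pdx u p.1 p.2 * pdy u p.1 p.2 :=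
    hu.contDiff_pdx.mul hu.contDiff_pdy
  have hg : ContDiff ℝ 2 fun p : ℝ × ℝ =>
      (pdy u p.1 p.2 ^ 2 - pdx u p.1 p.2 ^ 2) / 2 - F (u p.1 p.2) :=
    (((hu.contDiff_pdy.pow 2).sub (hu.contDiff_pdx.pow 2)).div_const 2).sub hFu
  have hdiv : ∀ x y, fderiv ℝ (fun p : ℝ × ℝ => pdx u p.1 p.2 * pdy u p.1 p.2) (x, y) (1, 0) +
      fderiv ℝ (fun p : ℝ × ℝ => (pdy u p.1 p.2 ^ 2 - pdx u p.1 p.2 ^ 2) / 2 -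
        F (u p.1 p.2)) (x, y) (0, 1) = -c * pdy u x y ^ 2 := fun x y => by
    have h1 := hasDerivAt_fst_of_differentiableAt (hf.differentiable (by simp) (x, y))
    have h2 := hasDerivAt_snd_of_differentiableAt (hg.differentiable (by simp) (x, y))
    have hyx := hasDerivAt_pdy (hu.contDiff_pdx.differentiable (by simp)) x y
    rw [← pdx_pdy_comm hu.contDiff_two] at hyx
    have h1' := (hu.hasJet.dxx x y).mul (hu.hasJet_pdy.dx x y)
    have hF' : HasDerivAt F (deriv F (u x y)) (u x y) :=
      (hF.differentiable (by simp) _).hasDerivAt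
    have h2' := ((((hu.hasJet.dyy x y).pow 2).sub (hyx.pow 2)).div_const 2).sub
      (hF'.comp y (hu.hasJet.dy x y))
    rw [h1.unique h1', h2.unique h2', ← hu.2.1 x y]
    simp
    ring
  have hcont : Continuous fun p : ℝ × ℝ =>
      fderiv ℝ (fun p : ℝ × ℝ => pdx u p.1 p.2 * pdy u p.1 p.2) p (1, 0) +
      fderiv ℝ (fun p : ℝ × ℝ => (pdy u p.1 p.2 ^ 2 - pdx u p.1 p.2 ^ 2) / 2 -
        F (u p.1 p.2)) p (0, 1) :=
    ((hf.continuous_fderiv (by simp)).clm_apply continuous_const).add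
      ((hg.continuous_fderiv (by simp)).clm_apply continuous_const)
  have key := integral2_divergence_prod_of_hasFDerivAt _ _ _ _ a y₀ b Y
    hf.continuous.continuousOn hg.continuous.continuousOn
    (fun p _ => (hf.differentiable (by simp) p).hasFDerivAt)
    (fun p _ => (hg.differentiable (by simp) p).hasFDerivAt)
    (hcont.continuousOn.integrableOn_compact (isCompact_uIcc.prod isCompact_uIcc))
  simp only [hdiv] at key
  rw [← key]
  have hnn : 0 ≤ ∫ x in a..b, ∫ y in y₀..Y, c * pdy u x y ^ 2 :=
    intervalIntegral.integral_nonneg hab fun x _ =>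
      intervalIntegral.integral_nonneg hY fun y _ => by positivity
  simpa [neg_mul, intervalIntegral.integral_neg] using hnn

/-- The integral of `u_x u_y` along a vertical segment is controlled by the increment of `u`. -/
lemma IsSolution.abs_integral_pdx_mul_pdy_le (hu : IsSolution F c u) {M : ℝ}
    (hM : ∀ x y, |pdx u x y| ≤ M) (x : ℝ) {y₀ Y : ℝ} (hY : y₀ ≤ Y) :
    |∫ y in y₀..Y, pdx u x y * pdy u x y| ≤ M * (u x Y - u x y₀) := by
  have hcy : Continuous fun y => pdy u x y :=
    hu.contDiff_pdy.continuous.comp (by fun_prop : Continuous fun y : ℝ => (x, y))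
  have h1 : ∫ y in y₀..Y, pdy u x y = u x Y - u x y₀ :=
    intervalIntegral.integral_eq_sub_of_hasDerivAt (fun y _ => hu.hasJet.dy x y)
      (hcy.intervalIntegrable _ _)
  rw [← h1, ← intervalIntegral.integral_const_mul, ← norm_eq_abs]
  refine intervalIntegral.norm_integral_le_of_norm_le hY
    (Eventually.of_forall fun y _ => ?_) ((hcy.const_mul M).intervalIntegrable (μ := volume) _ _)
  rw [norm_mul, norm_eq_abs, norm_eq_abs, abs_of_pos (hu.2.2.2 x y)]
  exact mul_le_mul_of_nonneg_right (hM x y) (hu.2.2.2 x y).le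

lemma IsTravelingWave.integral_energy_le (hF : ContDiff ℝ 3 F) (hc : 0 < c)
    (hu : IsTravelingWave F c u) {M : ℝ} (hM0 : 0 < M) (hM : ∀ x y, |pdx u x y| ≤ M)
    (hMxx : ∀ x y, |pdxx u x y| ≤ M) {a b : ℝ} (hab : a ≤ b) (y₀ : ℝ) :
    ∫ x in a..b, (F (u x y₀) - F 1 + pdx u x y₀ ^ 2 / 2 - pdy u x y₀ ^ 2 / 2) ≤
      M * (1 - u a y₀) + M * (1 - u b y₀) := by
  obtain ⟨hs, htop, -⟩ := hu
  have hcx : ∀ y, Continuous fun x => pdx u x y := fun y =>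
    hs.contDiff_pdx.continuous.comp (by fun_prop : Continuous fun x : ℝ => (x, y))
  have hcy : ∀ y, Continuous fun x => pdy u x y := fun y =>
    hs.contDiff_pdy.continuous.comp (by fun_prop : Continuous fun x : ℝ => (x, y))
  have hcu : ∀ y, Continuous fun x => u x y := fun y =>
    hs.1.continuous.comp (by fun_prop : Continuous fun x : ℝ => (x, y))
  have hcF : ∀ y, Continuous fun x => F (u x y) := fun y => hF.continuous.comp (hcu y)
  have hle1 : ∀ x y, u x y ≤ 1 := fun x y => (abs_le.1 (hs.2.2.1 x y)).2
  obtain ⟨K, hK⟩ := isCompact_Icc.exists_bound_of_continuousOn (s := Set.Icc (-1 : ℝ) 1)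
    hF.continuous.continuousOn
  have hlim : Tendsto (fun Y => ∫ x in a..b, (F (u x Y) + pdx u x Y ^ 2 / 2)) atTop
      (nhds (∫ _ in a..b, F 1)) := by
    refine intervalIntegral.tendsto_integral_filter_of_dominated_convergence
      (fun _ => K + M ^ 2 / 2) (Eventually.of_forall fun Y => ?_)
      (Eventually.of_forall fun Y => Eventually.of_forall fun x _ => ?_)
      intervalIntegrable_const (Eventually.of_forall fun x _ => ?_)
    · exact ((hcF Y).add (((hcx Y).pow 2).div_const 2)).aestronglyMeasurable
    · have h1 := hK _ (abs_le.1 (hs.2.2.1 x Y))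
      have h2 : ‖pdx u x Y ^ 2 / 2‖ ≤ M ^ 2 / 2 := by
        rw [norm_eq_abs, abs_of_nonneg (by positivity)]
        have := sq_le_sq' (neg_le_of_abs_le (hM x Y)) (le_of_abs_le (hM x Y))
        linarith
      exact (norm_add_le _ _).trans (add_le_add h1 h2)
    · have h1 := (hF.continuous.tendsto 1).comp (htop x)
      have h2 := ((tendsto_pdx_of_tendsto hM0 hs.hasJet hMxx htop x).pow 2).div_const 2
      simpa using h1.add h2
  rw [intervalIntegral.integral_const, smul_eq_mul] at hlim
  have hfin : ∀ Y, y₀ ≤ Y →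
      ∫ x in a..b, (F (u x y₀) - F 1 + pdx u x y₀ ^ 2 / 2 - pdy u x y₀ ^ 2 / 2) ≤
      (∫ x in a..b, (F (u x Y) + pdx u x Y ^ 2 / 2)) - (b - a) * F 1 +
        (M * (1 - u a y₀) + M * (1 - u b y₀)) := fun Y hY => by
    have h1 := hs.integral_flux_le hF hc hab hY
    have h2 := abs_le.1 (hs.abs_integral_pdx_mul_pdy_le hM a hY)
    have h3 := abs_le.1 (hs.abs_integral_pdx_mul_pdy_le hM b hY)
    have h4 := mul_le_mul_of_nonneg_left (hle1 a Y) hM0.le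
    have h5 := mul_le_mul_of_nonneg_left (hle1 b Y) hM0.le
    have h6 : -(∫ x in a..b, ((pdy u x Y ^ 2 - pdx u x Y ^ 2) / 2 - F (u x Y))) ≤
        ∫ x in a..b, (F (u x Y) + pdx u x Y ^ 2 / 2) := by
      rw [← intervalIntegral.integral_neg]
      refine intervalIntegral.integral_mono_on hab ?_ ?_ fun x _ => ?_
      · exact (((((hcy Y).pow 2).sub ((hcx Y).pow 2)).div_const 2).sub
          (hcF Y)).neg.intervalIntegrable _ _
      · exact ((hcF Y).add (((hcx Y).pow 2).div_const 2)).intervalIntegrable _ _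
      · linarith [sq_nonneg (pdy u x Y)]
    have h7 : ∫ x in a..b, (F (u x y₀) - F 1 + pdx u x y₀ ^ 2 / 2 - pdy u x y₀ ^ 2 / 2) =
        -(∫ x in a..b, ((pdy u x y₀ ^ 2 - pdx u x y₀ ^ 2) / 2 - F (u x y₀))) -
          (b - a) * F 1 := by
      rw [← intervalIntegral.integral_neg, ← smul_eq_mul, ← intervalIntegral.integral_const,
        ← intervalIntegral.integral_sub]
      · congr 1
        ext x
        ring
      · exact (((((hcy y₀).pow 2).sub ((hcx y₀).pow 2)).div_const 2).sub
          (hcF y₀)).neg.intervalIntegrable _ _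
      · exact intervalIntegrable_const
    rw [h7]
    linarith [h2.2, h3.1]
  have hlim2 := (hlim.sub_const ((b - a) * F 1)).add_const (M * (1 - u a y₀) + M * (1 - u b y₀))
  rw [sub_self, zero_add] at hlim2
  exact ge_of_tendsto hlim2 ((eventually_ge_atTop y₀).mono hfin)

end EnergyInequality

/-- On the zero level set the derivative in the direction of propagation is bounded away from
zero. -/
lemma IsTravelingWave.exists_pos_le_pdy {F : ℝ → ℝ} {c : ℝ} {u : ℝ → ℝ → ℝ}
    (hF : UnbalancedDoubleWell F) (hc : 0 < c) (hu : IsTravelingWave F c u) {M : ℝ} (hM0 : 0 < M)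
    (hx : ∀ x y, |pdx u x y| ≤ M) (hxy : ∀ x y, |pdx (pdy u) x y| ≤ M)
    (hyy : ∀ x y, |pdyy u x y| ≤ M) (hxx : ∀ x y, |pdxx u x y| ≤ M) {K : ℝ} (hK0 : 0 < K)
    (hK : ∀ x y, |deriv (deriv F) (u x y)| ≤ K) :
    ∃ ε > 0, ∀ x y, u x y = 0 → ε ≤ pdy u x y := by
  have hs : IsSolution F c u := hu.1
  obtain ⟨κ, hκ, R, hR, δ₁, hδ₁, hgain⟩ := hF.exists_energy_gain hM0
  set C := exp (c / 2) * (2 + c ^ 2 / 4) + c / 2 with hC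
  have hC0 : 0 < C := by positivity
  set δ := min (δ₁ / (c + C * (1 + K))) (min 1 (κ / R)) with hδ
  have hδ0 : 0 < δ := lt_min (by positivity) (lt_min one_pos (by positivity))
  have hδ1 : c * δ + C * (δ + K * δ) ≤ δ₁ := by
    have h1 := mul_le_mul_of_nonneg_left (min_le_left (δ₁ / (c + C * (1 + K))) (min 1 (κ / R)))
      (by positivity : 0 ≤ c + C * (1 + K))
    have h2 : (c + C * (1 + K)) * (δ₁ / (c + C * (1 + K))) = δ₁ := by field_simp
    linarith
  have hδ2 : R * δ ^ 2 ≤ κ := by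
    have h1 : δ ≤ 1 := (min_le_right _ _).trans (min_le_left _ _)
    have h2 : δ ≤ κ / R := (min_le_right _ _).trans (min_le_right _ _)
    have h3 : δ ^ 2 ≤ κ / R := by nlinarith
    have h4 := mul_le_mul_of_nonneg_left h3 hR.le
    have h5 : R * (κ / R) = κ := by field_simp
    linarith
  obtain ⟨ε, hε, hsmall⟩ := exists_pos_forall_le_of_supersolution hc hK0 hM0 hδ0
    (by linarith : 0 < R + 1)
  refine ⟨ε, hε, fun x₀ y₀ hzero => ?_⟩
  by_contra! hlt
  have hw := hsmall _ _ _ _ _ hs.hasJet_pdy hs.2.2.2 (fun x y => by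
    rw [hs.linearized hF.1]
    exact mul_le_mul_of_nonneg_right (le_of_abs_le (hK x y)) (hs.2.2.2 x y).le) hxy hyy x₀ y₀ hlt
  have hwabs : ∀ x y, |x - x₀| ≤ R + 1 → |y - y₀| ≤ R + 1 → |pdy u x y| ≤ δ :=
    fun x y h1 h2 => by rw [abs_of_pos (hs.2.2.2 x y)]; exact hw x y h1 h2
  have hode : ∀ t, |t| ≤ R → |pdxx u (x₀ + t) y₀ - deriv F (u (x₀ + t) y₀)| ≤ δ₁ := fun t ht => by
    have ht' := abs_le.1 ht
    have hin : ∀ x ∈ Set.Icc (x₀ + t - 1) (x₀ + t + 1), |x - x₀| ≤ R + 1 := fun x hx =>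
      abs_le.2 ⟨by linarith [hx.1, ht'.1], by linarith [hx.2, ht'.2]⟩
    have hin' : ∀ y ∈ Set.Icc (y₀ - 1) (y₀ + 1), |y - y₀| ≤ R + 1 := fun y hy =>
      abs_le.2 ⟨by linarith [hy.1], by linarith [hy.2]⟩
    have h1 := (hs.hasJet_pdy.abs_gradient_le hc (x₀ + t) y₀ (M := δ) (N := K * δ)
      (fun x hx y hy => hwabs x y (hin x hx) (hin' y hy)) (fun x hx y hy => by
        rw [hs.linearized hF.1, abs_mul]
        exact mul_le_mul (hK x y) (hwabs x y (hin x hx) (hin' y hy)) (abs_nonneg _) hK0.le)).2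
    have h2 := hwabs (x₀ + t) y₀ (hin _ ⟨by linarith, by linarith⟩) (hin' _ ⟨by linarith, by linarith⟩)
    rw [← hs.2.1 (x₀ + t) y₀]
    rw [← hC] at h1
    rw [abs_le] at h1 h2
    have h3 := mul_le_mul_of_nonneg_left h2.1 hc.le
    have h4 := mul_le_mul_of_nonneg_left h2.2 hc.le
    exact abs_le.2 ⟨by linarith [h1.2], by linarith [h1.1]⟩
  obtain ⟨b, hb, hgb⟩ := hgain (fun t => u (x₀ + t) y₀) (fun t => pdx u (x₀ + t) y₀)
    (fun t => pdxx u (x₀ + t) y₀) (fun t => (hs.hasJet.dx (x₀ + t) y₀).comp_const_add x₀ t)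
    (fun t => (hs.hasJet.dxx (x₀ + t) y₀).comp_const_add x₀ t) (fun t => hs.2.2.1 _ _)
    (fun t => hx _ _) (by simpa using hzero) hode
  obtain ⟨a, ha, hga⟩ := hgain (fun t => u (x₀ - t) y₀) (fun t => -pdx u (x₀ - t) y₀)
    (fun t => pdxx u (x₀ - t) y₀) (fun t => (hs.hasJet.dx (x₀ - t) y₀).comp_const_sub x₀ t)
    (fun t => ((hs.hasJet.dxx (x₀ - t) y₀).comp_const_sub x₀ t).neg.congr_deriv (neg_neg _))
    (fun t => hs.2.2.1 _ _) (fun t => by rw [abs_neg]; exact hx _ _) (by simpa using hzero)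
    (fun t ht => by simpa [sub_eq_add_neg] using hode (-t) (by rwa [abs_neg]))
  simp only [neg_sq] at hga
  have hcx : Continuous fun x => pdx u x y₀ :=
    hs.contDiff_pdx.continuous.comp (by fun_prop : Continuous fun x : ℝ => (x, y₀))
  have hcy : Continuous fun x => pdy u x y₀ :=
    hs.contDiff_pdy.continuous.comp (by fun_prop : Continuous fun x : ℝ => (x, y₀))
  have hcF : Continuous fun x => F (u x y₀) := hF.1.continuous.comp
    (hs.1.continuous.comp (by fun_prop : Continuous fun x : ℝ => (x, y₀)))
  have hce : Continuous fun x => F (u x y₀) - F 1 + pdx u x y₀ ^ 2 / 2 :=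
    (hcF.sub continuous_const).add ((hcx.pow 2).div_const 2)
  have hab : x₀ - a ≤ x₀ + b := by linarith [ha.1, hb.1]
  have hsplit : (∫ x in (x₀ - a)..(x₀ + b), (F (u x y₀) - F 1 + pdx u x y₀ ^ 2 / 2)) =
      (∫ t in (0 : ℝ)..a, (F (u (x₀ - t) y₀) - F 1 + pdx u (x₀ - t) y₀ ^ 2 / 2)) +
      ∫ t in (0 : ℝ)..b, (F (u (x₀ + t) y₀) - F 1 + pdx u (x₀ + t) y₀ ^ 2 / 2) := by
    rw [intervalIntegral.integral_comp_sub_left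
      (fun x => F (u x y₀) - F 1 + pdx u x y₀ ^ 2 / 2) x₀,
      intervalIntegral.integral_comp_add_left
      (fun x => F (u x y₀) - F 1 + pdx u x y₀ ^ 2 / 2) x₀, sub_zero, add_zero]
    exact (intervalIntegral.integral_add_adjacent_intervals (hce.intervalIntegrable _ _)
      (hce.intervalIntegrable _ _)).symm
  have hen := hu.integral_energy_le hF.1 hc hM0 hx hxx hab y₀
  rw [intervalIntegral.integral_sub (hce.intervalIntegrable _ _)
    ((by fun_prop : Continuous fun x => pdy u x y₀ ^ 2 / 2).intervalIntegrable _ _),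
    hsplit] at hen
  have hle : ∫ x in (x₀ - a)..(x₀ + b), pdy u x y₀ ^ 2 / 2 ≤ R * δ ^ 2 := by
    calc _ ≤ ∫ x in (x₀ - a)..(x₀ + b), δ ^ 2 / 2 := by
          refine intervalIntegral.integral_mono_on hab
            ((by fun_prop : Continuous fun x => pdy u x y₀ ^ 2 / 2).intervalIntegrable _ _)
            intervalIntegrable_const fun x hx => ?_
          have h1 := abs_le.1 (hwabs x y₀ (abs_le.2 ⟨by linarith [hx.1, ha.2],
            by linarith [hx.2, hb.2]⟩) (by rw [sub_self, abs_zero]; linarith))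
          have := sq_le_sq' h1.1 h1.2
          linarith
      _ = (a + b) * (δ ^ 2 / 2) := by
          rw [intervalIntegral.integral_const, smul_eq_mul]; ring
      _ ≤ _ := by nlinarith [ha.2, hb.2, sq_nonneg δ]
  linarith

/-- A function on the plane which is increasing in the second variable and changes sign along
every vertical line has a zero level set which is a graph, as smooth as the function itself. -/
lemma exists_contDiff_graph_of_pdy_pos {u : ℝ → ℝ → ℝ}
    (hu : ContDiff ℝ 3 fun p : ℝ × ℝ => u p.1 p.2) (hpos : ∀ x y, 0 < pdy u x y)
    (hneg : ∀ x, ∃ y, u x y ≤ 0) (hnn : ∀ x, ∃ y, 0 ≤ u x y) :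
    ∃ k : ℝ → ℝ, ContDiff ℝ 3 k ∧ ∀ x y, u x y = 0 ↔ y = k x := by
  have hd : Differentiable ℝ fun p : ℝ × ℝ => u p.1 p.2 := hu.differentiable (by simp)
  have hmono : ∀ x, StrictMono fun y => u x y := fun x =>
    strictMono_of_deriv_pos fun y => hpos x y
  have hex : ∀ x, ∃ y, u x y = 0 := fun x => by
    obtain ⟨a, ha⟩ := hneg x
    obtain ⟨b, hb⟩ := hnn x
    exact mem_range_of_exists_le_of_exists_ge
      (hu.continuous.comp (by fun_prop : Continuous fun y : ℝ => (x, y))) ⟨a, ha⟩ ⟨b, hb⟩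
  choose k hk using hex
  have hiff : ∀ x y, u x y = 0 ↔ y = k x := fun x y =>
    ⟨fun h => (hmono x).injective (h.trans (hk x).symm), fun h => h ▸ hk x⟩
  refine ⟨k, contDiff_iff_contDiffAt.2 fun x => ?_, hiff⟩
  have hinv : (fderiv ℝ (fun p : ℝ × ℝ => u p.1 p.2) (x, k x) ∘L
      .inr ℝ ℝ ℝ).IsInvertible := by
    have hne : pdy u x (k x) ≠ 0 := (hpos x (k x)).ne'
    refine ⟨ContinuousLinearEquiv.unitsEquivAut ℝ (Units.mk0 _ hne), ?_⟩
    ext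
    simp [pdy_eq_fderiv hd]
  have hcd := hu.contDiffAt (x := (x, k x))
  refine (hcd.contDiffAt_implicitFunction (by simp) hinv).congr_of_eventuallyEq ?_
  filter_upwards [hcd.eventually_apply_implicitFunction (by simp) hinv] with t ht
  exact ((hiff t _).1 (ht.trans (hk x))).symm

/-- The zero level set of a monotone traveling wave of the unbalanced
Allen-Cahn equation is the graph of a globally Lipschitz `C³` function
(Lemma 3.1). -/
theorem unbalanced_level_set_globally_Lipschitz
    (F : ℝ → ℝ) (hF : UnbalancedDoubleWell F) (c : ℝ) (hc : 0 < c)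
    (u : ℝ → ℝ → ℝ) (hu : IsTravelingWave F c u) :
    ∃ k : ℝ → ℝ, ContDiff ℝ 3 k ∧ (∀ x y : ℝ, u x y = 0 ↔ y = k x) ∧
      ∃ C > (0 : ℝ), ∀ x : ℝ, |deriv k x| ≤ C := by
  have hs : IsSolution F c u := hu.1
  obtain ⟨K, hK0, M, hM0, hK, hx, hy, hxy, hyy, hxx⟩ := hs.exists_bounds hF.1 hc
  obtain ⟨ε, hε, hlow⟩ := hu.exists_pos_le_pdy hF hc hM0 hx hxy hyy hxx hK0 hK
  obtain ⟨k, hk, hiff⟩ := exists_contDiff_graph_of_pdy_pos hs.1 hs.2.2.2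
    (fun x => ((hu.2.2 x).eventually_le_const (by norm_num)).exists)
    (fun x => ((hu.2.1 x).eventually_const_le (by norm_num)).exists)
  refine ⟨k, hk, hiff, M / ε, by positivity, fun x => ?_⟩
  have hd : Differentiable ℝ fun p : ℝ × ℝ => u p.1 p.2 := hs.1.differentiable (by simp)
  have hkd : HasDerivAt k (deriv k x) x := (hk.differentiable (by simp) x).hasDerivAt
  have hzero : pdx u x (k x) + deriv k x * pdy u x (k x) = 0 := by
    have h1 := (hd (x, k x)).hasFDerivAt.comp_hasDerivAt x ((hasDerivAt_id x).prodMk hkd)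
    have h2 : HasDerivAt (fun t => u t (k t)) 0 x :=
      (hasDerivAt_const x (0 : ℝ)).congr_of_eventuallyEq
        (Eventually.of_forall fun t => (hiff t (k t)).2 rfl)
    rw [pdx_eq_fderiv hd, pdy_eq_fderiv hd, ← smul_eq_mul, ← map_smul, ← map_add]
    simpa using h1.unique h2
  have hle := hlow x (k x) ((hiff x (k x)).2 rfl)
  rw [le_div_iff₀ hε]
  calc |deriv k x| * ε ≤ |deriv k x| * pdy u x (k x) := by gcongr
    _ = |pdx u x (k x)| := by
        rw [← abs_of_pos (hs.2.2.2 x (k x)), ← abs_mul, ← abs_neg (pdx u x (k x))]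
        congr 1
        linarith
    _ ≤ M := hx x (k x)
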